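/- Contour deformation across the branch cut: Let v ∈ (0,1) and let a, b satisfy 0 < a < 1 < b < R and |u'·A(w)| < |w|^s for all |u'| ≤ v and all a ≤ |w| ≤ b. Fix u ∈ (0, v) and z ∈ (a, 1), set k(w) = w^s − u·A(w), and let ζ_0, …, ζ_{s−1} be the zeros of k in |w| < 1 listed with multiplicity (all of which satisfy |ζ_k| < a). Then Σ_{k=0}^{s−1} Log((z − ζ_k)/(1 − ζ_k)) = (1/(2πi)) ∮_{|w|=b} Log((z − w)/(1 − w)) · (k'(w)/k(w)) dw − log(1 − u) + log k(z), where Log is the principal complex logarithm, log(1 − u) and log k(z) are real logarithms of the positive numbers 1 − u and k(z) = z^s − u·A(z) > 0, and the contour integral is over the positively oriented circle of radius b. -/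

import Mathlib

/-!
Write `L w = Log ((z - w) / (1 - w))`, which is holomorphic on `|w| > 1` and decays like `1 / w`.
Dividing the zeros `ζ j` out of `k` gives a decomposition of the logarithmic derivative,
`k' / k = ∑ j, 1 / (w - ζ j) + q`, where `q` is holomorphic near the closed disk `|w| ≤ b`
(inside the disk `|w| < 1` it is `g' / g`).  Let `h` be a primitive of `q` near that disk.

* The terms `L w / (w - ζ j)` integrate to `0` over `|w| = b`: the contour can be pushed to infinity,
  where the integrand is `O(1 / |w|²)` (`circleIntegral_logRatio_div`).
* The term `L q` is integrated by parts; as `L' w = 1 / (w - z) - 1 / (w - 1)`, Cauchy's formula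
  gives `2πi (h 1 - h z)` (`circleIntegral_logRatio_mul`).

It remains to see that `∑ j, Log ((z - ζ j) / (1 - ζ j)) = h 1 - h z - Log (k 1) + Log (k z)`.
As functions of `z ∈ (a, 1]` both sides have the same derivative and both vanish at `z = 1`, and no
branch of a logarithm is crossed since `Re k > 0` and `Re ((z - ζ j) / (1 - ζ j)) > 0` on that
segment.
-/

open MeasureTheory ProbabilityTheory

/-- The probability generating function `A(z) = E(z^A) = ∑_j P(A = j) z^j`. -/
noncomputable def pgf {Ω : Type*} [MeasureSpace Ω] (A : Ω → ℕ) (z : ℂ) : ℂ :=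
  ∑' j : ℕ, ((ℙ {ω | A ω = j}).toReal : ℂ) * z ^ j

open Metric Set Filter Topology

/-! ### The logarithm of the ratio `(t - w) / (1 - w)` -/

/-- If `‖w‖` lies on the same side of both `t` and `1`, then `(t - w) / (1 - w)` has positive real
part: its numerator after rationalizing is at least `(‖w‖ - t) * (‖w‖ - 1)`. -/
lemma ratio_re_pos {t : ℝ} (ht : 0 ≤ t) {w : ℂ} (h : 0 < (‖w‖ - t) * (‖w‖ - 1)) :
    0 < (((t : ℂ) - w) / (1 - w)).re := by
  have h1 : (1 : ℂ) - w ≠ 0 := by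
    intro h0
    have : w = 1 := (sub_eq_zero.1 h0).symm
    simp [this] at h
  have hpos : 0 < Complex.normSq (1 - w) := Complex.normSq_pos.2 h1
  have hre : w.re ≤ ‖w‖ := Complex.re_le_norm w
  have hsq : w.re * w.re + w.im * w.im = ‖w‖ ^ 2 := by
    rw [← Complex.normSq_apply, Complex.normSq_eq_norm_sq]
  rw [Complex.div_re, ← add_div]
  apply div_pos _ hpos
  simp only [Complex.sub_re, Complex.sub_im, Complex.ofReal_re, Complex.ofReal_im, Complex.one_re,
    Complex.one_im]
  nlinarith

lemma ratio_mem_slitPlane {t : ℝ} (ht : 0 ≤ t) {w : ℂ} (h : 0 < (‖w‖ - t) * (‖w‖ - 1)) :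
    ((t : ℂ) - w) / (1 - w) ∈ Complex.slitPlane :=
  Or.inl (ratio_re_pos ht h)

lemma hasDerivAt_logRatio {z : ℝ} (hz0 : 0 ≤ z) (hz1 : z < 1) {w : ℂ} (hw : 1 < ‖w‖) :
    HasDerivAt (fun w : ℂ => Complex.log (((z : ℂ) - w) / (1 - w)))
      ((w - z)⁻¹ - (w - 1)⁻¹) w := by
  have hmem := ratio_mem_slitPlane hz0 (w := w) (mul_pos (by linarith) (by linarith))
  have h1 : (1 : ℂ) - w ≠ 0 := by
    intro h0
    have : w = 1 := (sub_eq_zero.1 h0).symm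
    simp [this] at hw
  have h2 : (z : ℂ) - w ≠ 0 := by
    intro h0
    rw [h0, zero_div] at hmem
    exact Complex.slitPlane_ne_zero hmem rfl
  have h1' : w - 1 ≠ 0 := by rwa [← neg_ne_zero, neg_sub]
  have h2' : w - (z : ℂ) ≠ 0 := by rwa [← neg_ne_zero, neg_sub]
  have hd := ((((hasDerivAt_id w).const_sub (z : ℂ)).div ((hasDerivAt_id w).const_sub 1) h1).clog
    hmem)
  refine hd.congr_deriv ?_
  simp only [id, Pi.div_apply]
  field_simp
  ring

/-! ### The two contour integrals -/

/-- The exterior integral vanishes: `Log ((z - w) / (1 - w)) / (w - ζ)` is holomorphic on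
`|w| ≥ b` and `O(1 / |w|²)` at infinity. -/
lemma circleIntegral_logRatio_div {z b : ℝ} (hz0 : 0 ≤ z) (hz1 : z < 1) (hb : 1 < b) {ζ : ℂ}
    (hζ : ‖ζ‖ < 1) :
    (∮ w in C(0, b), Complex.log (((z : ℂ) - w) / (1 - w)) * (w - ζ)⁻¹) = 0 := by
  set f : ℂ → ℂ := fun w => Complex.log (((z : ℂ) - w) / (1 - w)) * (w - ζ)⁻¹ with hf
  have hdiff : ∀ w : ℂ, 1 < ‖w‖ → DifferentiableAt ℂ f w := by
    intro w hw
    have hne : w - ζ ≠ 0 := by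
      intro h0
      rw [sub_eq_zero.1 h0] at hw
      linarith
    exact (hasDerivAt_logRatio hz0 hz1 hw).differentiableAt.mul
      ((differentiableAt_id.sub_const ζ).inv hne)
  have heq : ∀ r : ℝ, b ≤ r → (∮ w in C(0, r), f w) = ∮ w in C(0, b), f w := by
    intro r hr
    refine Complex.circleIntegral_eq_of_differentiable_on_annulus_off_countable (by linarith) hr
      countable_empty ?_ ?_
    · intro w hw
      have : b ≤ ‖w‖ := by simpa using hw.2
      exact (hdiff w (by linarith)).continuousAt.continuousWithinAt
    · intro w hw
      have : b < ‖w‖ := by simpa using hw.1.2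
      exact hdiff w (by linarith)
  have hbound : ∀ r : ℝ, 3 ≤ r → ‖∮ w in C(0, r), f w‖ ≤ 12 * Real.pi * r⁻¹ := by
    intro r hr
    have h1 : ∀ w ∈ sphere (0 : ℂ) r, ‖f w‖ ≤ 6 / r ^ 2 := by
      intro w hw
      have hw' : ‖w‖ = r := by simpa using hw
      have hn1 : r / 2 ≤ ‖1 - w‖ := by
        have := norm_sub_norm_le w 1
        rw [norm_sub_rev, hw', norm_one] at this
        linarith
      have hn2 : r / 2 ≤ ‖w - ζ‖ := by
        have := norm_sub_norm_le w ζ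
        rw [hw'] at this
        linarith
      have hne : 1 - w ≠ 0 := norm_pos_iff.1 (by linarith)
      have hrat : ((z : ℂ) - w) / (1 - w) = 1 + ((z : ℂ) - 1) / (1 - w) := by
        field_simp
        ring
      have hz1n : ‖(z : ℂ) - 1‖ ≤ 1 := by
        rw [← Complex.ofReal_one, ← Complex.ofReal_sub, Complex.norm_real, Real.norm_eq_abs,
          abs_le]
        constructor <;> linarith
      have hx : ‖((z : ℂ) - 1) / (1 - w)‖ ≤ 2 / r := by
        rw [norm_div]
        calc ‖(z : ℂ) - 1‖ / ‖1 - w‖ ≤ 1 / (r / 2) := by gcongr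
          _ = 2 / r := by field_simp
      have hx' : ‖((z : ℂ) - 1) / (1 - w)‖ ≤ 1 / 2 := by
        have hn3 : 2 ≤ ‖1 - w‖ := by
          have := norm_sub_norm_le w 1
          rw [norm_sub_rev, hw', norm_one] at this
          linarith
        rw [norm_div]
        gcongr
      have hlog := Complex.norm_log_one_add_half_le_self hx'
      rw [hf]
      simp only [norm_mul, norm_inv, hrat]
      calc ‖Complex.log (1 + ((z : ℂ) - 1) / (1 - w))‖ * ‖w - ζ‖⁻¹
          ≤ (3 / 2 * (2 / r)) * (r / 2)⁻¹ := by
            gcongr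
            exact hlog.trans (by gcongr)
        _ = 6 / r ^ 2 := by field_simp; norm_num
    refine (circleIntegral.norm_integral_le_of_norm_le_const (by linarith) h1).trans_eq ?_
    have : r ≠ 0 := by linarith
    field_simp
    norm_num
  have hlim : Tendsto (fun r : ℝ => 12 * Real.pi * r⁻¹) atTop (𝓝 0) := by
    simpa using tendsto_inv_atTop_zero.const_mul (12 * Real.pi)
  have hle : ‖∮ w in C(0, b), f w‖ ≤ 0 := by
    refine ge_of_tendsto hlim ?_
    filter_upwards [eventually_ge_atTop b, eventually_ge_atTop 3] with r hr hr3
    rw [← heq r hr]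
    exact hbound r hr3
  exact norm_le_zero_iff.1 hle

/-- Integration by parts followed by Cauchy's formula, for `q` with primitive `h`. -/
lemma circleIntegral_logRatio_mul {z b c : ℝ} (hz0 : 0 ≤ z) (hz1 : z < 1) (hb : 1 < b)
    (hbc : b < c) {q h : ℂ → ℂ} (hq : ContinuousOn q (ball 0 c))
    (hh : ∀ w ∈ ball (0 : ℂ) c, HasDerivAt h (q w) w) :
    (∮ w in C(0, b), Complex.log (((z : ℂ) - w) / (1 - w)) * q w)
      = 2 * Real.pi * Complex.I * (h 1 - h z) := by
  set L : ℂ → ℂ := fun w => Complex.log (((z : ℂ) - w) / (1 - w)) with hL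
  have hb0 : 0 ≤ b := by linarith
  have hsph : sphere (0 : ℂ) b ⊆ ball 0 c := fun w hw => by
    simp only [mem_sphere, mem_ball] at *
    linarith
  have hLd : ∀ w ∈ sphere (0 : ℂ) b, HasDerivAt L ((w - z)⁻¹ - (w - 1)⁻¹) w := fun w hw =>
    hasDerivAt_logRatio hz0 hz1 (by rw [mem_sphere_zero_iff_norm.1 hw]; exact hb)
  have hLc : ContinuousOn L (sphere 0 b) := fun w hw =>
    (hLd w hw).continuousAt.continuousWithinAt
  have hhd : DifferentiableOn ℂ h (closedBall 0 b) := fun w hw =>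
    (hh w (closedBall_subset_ball hbc hw)).differentiableAt.differentiableWithinAt
  have hhc : ContinuousOn h (sphere 0 b) := hhd.continuousOn.mono sphere_subset_closedBall
  have hzb : (z : ℂ) ∈ ball (0 : ℂ) b := by
    simp [abs_of_nonneg hz0]
    linarith
  have h1b : (1 : ℂ) ∈ ball (0 : ℂ) b := by simpa using hb
  have hinv : ∀ x ∈ ball (0 : ℂ) b, ContinuousOn (fun w : ℂ => (w - x)⁻¹ • h w) (sphere 0 b) := by
    intro x hx
    refine ContinuousOn.smul (ContinuousOn.inv₀ (continuousOn_id.sub continuousOn_const) ?_) hhc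
    intro w hw h0
    have hwx : w = x := sub_eq_zero.1 h0
    rw [← hwx] at hx
    simp only [mem_sphere, mem_ball] at *
    linarith
  have hI1 : CircleIntegrable (fun w => L w * q w) 0 b :=
    (hLc.mul (hq.mono hsph)).circleIntegrable hb0
  have hI2 := (hinv z hzb).circleIntegrable hb0
  have hI3 := (hinv 1 h1b).circleIntegrable hb0
  have hzero : (∮ w in C(0, b), (L w * q w + ((w - (z : ℂ))⁻¹ • h w - (w - 1)⁻¹ • h w))) = 0 := by
    refine circleIntegral.integral_eq_zero_of_hasDerivWithinAt (f := fun w => L w * h w) hb0 ?_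
    intro w hw
    refine ((hLd w hw).mul (hh w (hsph hw))).hasDerivWithinAt.congr_deriv ?_
    simp only [smul_eq_mul]
    ring
  rw [circleIntegral.integral_add hI1 (hI2.fun_sub hI3), circleIntegral.integral_sub hI2 hI3,
    hhd.circleIntegral_sub_inv_smul hzb, hhd.circleIntegral_sub_inv_smul h1b] at hzero
  simp only [smul_eq_mul] at hzero
  linear_combination hzero

/-! ### The regular part of `k' / k` -/

/-- After removal of the poles at the zeros `ζ j`, the logarithmic derivative `k' / k` extends
holomorphically to a neighbourhood of the closed disk of radius `b`. -/
lemma exists_analytic_remainder {s : ℕ} {a b : ℝ} (ha1 : a < 1) {k g : ℂ → ℂ} {ζ : Fin s → ℂ}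
    (hk : AnalyticOnNhd ℂ k (closedBall 0 b))
    (hkne : ∀ w : ℂ, a ≤ ‖w‖ → ‖w‖ ≤ b → k w ≠ 0)
    (hζ : ∀ j, ‖ζ j‖ < a)
    (hg : AnalyticOnNhd ℂ g (closedBall 0 1))
    (hgne : ∀ w ∈ closedBall (0 : ℂ) 1, g w ≠ 0)
    (hfac : ∀ w ∈ closedBall (0 : ℂ) 1, k w = (∏ j, (w - ζ j)) * g w) :
    ∃ q : ℂ → ℂ, AnalyticOnNhd ℂ q (closedBall 0 b) ∧
      ∀ w : ℂ, a < ‖w‖ → deriv k w / k w = ∑ j, (w - ζ j)⁻¹ + q w := by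
  classical
  set p : ℂ → ℂ := fun w => deriv k w / k w - ∑ j, (w - ζ j)⁻¹ with hp
  have hζne : ∀ w : ℂ, a < ‖w‖ → ∀ j, w - ζ j ≠ 0 := by
    intro w hw j h0
    rw [sub_eq_zero.1 h0] at hw
    linarith [hζ j]
  have hpg : ∀ w : ℂ, a < ‖w‖ → ‖w‖ < 1 → p w = logDeriv g w := by
    intro w hw hw1
    have hw1' : w ∈ closedBall (0 : ℂ) 1 := by simpa using hw1.le
    have hev : k =ᶠ[𝓝 w] fun w => (∏ j, (w - ζ j)) * g w := by
      have : ball (0 : ℂ) 1 ∈ 𝓝 w := isOpen_ball.mem_nhds (by simpa using hw1)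
      filter_upwards [this] with x hx using hfac x (ball_subset_closedBall hx)
    have hlog : deriv k w / k w = logDeriv (fun w => (∏ j, (w - ζ j)) * g w) w := by
      rw [logDeriv_apply, hev.deriv_eq, hev.eq_of_nhds]
    rw [hp]
    simp only
    rw [hlog, logDeriv_mul (f := fun w => ∏ j, (w - ζ j)) w
      (Finset.prod_ne_zero_iff.2 fun j _ => hζne w hw j) (hgne w hw1')
      (by fun_prop) (hg w hw1').differentiableAt,
      logDeriv_prod (f := fun j w => w - ζ j) (fun j _ => hζne w hw j) (fun j _ => by fun_prop)]
    simp [logDeriv_apply]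
  refine ⟨fun w => if ‖w‖ ≤ a then logDeriv g w else p w, ?_, ?_⟩
  · intro w hwb
    rcases le_or_gt ‖w‖ a with hwa | hwa
    · have hw1 : w ∈ closedBall (0 : ℂ) 1 := by
        simp only [mem_closedBall_zero_iff]
        linarith
      have han : AnalyticAt ℂ (logDeriv g) w := (hg w hw1).deriv.div (hg w hw1) (hgne w hw1)
      refine han.congr ?_
      have : ball (0 : ℂ) 1 ∈ 𝓝 w := isOpen_ball.mem_nhds (by
        simp only [mem_ball_zero_iff]
        linarith)
      filter_upwards [this] with x hx
      split_ifs with hxa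
      · rfl
      · exact (hpg x (not_le.1 hxa) (by simpa using hx)).symm
    · have han : AnalyticAt ℂ p w := by
        refine ((hk w hwb).deriv.div (hk w hwb)
          (hkne w hwa.le (by simpa using hwb))).sub ?_
        refine Finset.analyticAt_fun_sum _ fun j _ => ?_
        exact (analyticAt_id.sub analyticAt_const).inv (hζne w hwa j)
      refine han.congr ?_
      have : {x : ℂ | a < ‖x‖} ∈ 𝓝 w := (isOpen_lt continuous_const continuous_norm).mem_nhds hwa
      filter_upwards [this] with x hx
      rw [if_neg (not_le.2 hx)]
  · intro w hw
    simp only [if_neg (not_le.2 hw), hp]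
    ring

/-! ### Identification of the branch -/

/-- Both sides have the same derivative in `z` and vanish at `z = 1`. -/
lemma sum_log_ratio_eq {s : ℕ} {a z : ℝ} (ha : 0 < a) (hz : a < z) (hz1 : z < 1)
    {k q h : ℂ → ℂ} {ζ : Fin s → ℂ} (hζ : ∀ j, ‖ζ j‖ < a)
    (hkd : ∀ t ∈ Icc z 1, DifferentiableAt ℂ k (t : ℝ))
    (hkre : ∀ t ∈ Icc z 1, 0 < (k (t : ℝ)).re)
    (hh : ∀ t ∈ Icc z 1, HasDerivAt h (q (t : ℝ)) (t : ℝ))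
    (hkq : ∀ w : ℂ, a < ‖w‖ → deriv k w / k w = ∑ j, (w - ζ j)⁻¹ + q w) :
    ∑ j, Complex.log (((z : ℂ) - ζ j) / (1 - ζ j))
      = h 1 - h z - Complex.log (k 1) + Complex.log (k z) := by
  set D : ℂ → ℂ := fun t => ∑ j, Complex.log ((t - ζ j) / (1 - ζ j)) + h t - Complex.log (k t)
    with hD
  have h1ne : ∀ j, 1 - ζ j ≠ 0 := by
    intro j h0
    have := hζ j
    rw [← sub_eq_zero.1 h0, norm_one] at this
    linarith
  have hder : ∀ t ∈ Icc z 1, HasDerivAt (fun t : ℝ => D t) 0 t := by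
    intro t ht
    have hslit : ∀ j, ((t : ℂ) - ζ j) / (1 - ζ j) ∈ Complex.slitPlane := by
      intro j
      rcases ht.2.lt_or_eq with h | rfl
      · exact ratio_mem_slitPlane (by linarith [ht.1])
          (mul_pos_of_neg_of_neg (by linarith [hζ j, ht.1]) (by linarith [hζ j, ht.1]))
      · rw [Complex.ofReal_one, div_self (h1ne j)]
        exact Complex.one_mem_slitPlane
    have hlog : ∀ j ∈ Finset.univ, HasDerivAt (fun t : ℂ => Complex.log ((t - ζ j) / (1 - ζ j)))
        (((t : ℂ) - ζ j)⁻¹) (t : ℂ) := by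
      intro j _
      have hne : (t : ℂ) - ζ j ≠ 0 := by
        intro h0
        have := hslit j
        rw [h0, zero_div] at this
        exact Complex.slitPlane_ne_zero this rfl
      refine ((((hasDerivAt_id (t : ℂ)).sub_const (ζ j)).div_const (1 - ζ j)).clog
        (hslit j)).congr_deriv ?_
      have := h1ne j
      simp only [id]
      field_simp
    have hsum := HasDerivAt.fun_sum hlog
    have hk := (hkd t ht).hasDerivAt.clog (Or.inl (hkre t ht))
    have htot : HasDerivAt D 0 (t : ℂ) := by
      refine ((hsum.add (hh t ht)).sub hk).congr_deriv ?_
      have hta : a < ‖(t : ℂ)‖ := by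
        rw [Complex.norm_real, Real.norm_eq_abs]
        exact lt_of_lt_of_le (by linarith [ht.1]) (le_abs_self t)
      rw [hkq _ hta]
      ring
    exact htot.comp_ofReal
  have hconst := constant_of_has_deriv_right_zero (f := fun t : ℝ => D t) (a := z) (b := 1)
    (fun t ht => (hder t ht).continuousAt.continuousWithinAt)
    (fun t ht => (hder t ⟨ht.1, ht.2.le⟩).hasDerivWithinAt) 1 ⟨hz1.le, le_rfl⟩
  have hone : ∑ j, Complex.log ((1 - ζ j) / (1 - ζ j)) = 0 :=
    Finset.sum_eq_zero fun j _ => by rw [div_self (h1ne j), Complex.log_one]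
  simp only [hD, Complex.ofReal_one, hone] at hconst
  linear_combination -hconst

/-! ### The generating function at `1` and the conclusion -/

lemma pgf_one {Ω : Type*} [MeasureSpace Ω] [IsProbabilityMeasure (ℙ : Measure Ω)] {A : Ω → ℕ}
    (hmeas : Measurable A) : pgf A 1 = 1 := by
  have hE : ∑' j : ℕ, (ℙ {ω | A ω = j}) = 1 := by
    have hun : (⋃ j : ℕ, {ω | A ω = j}) = univ := by
      ext ω
      simp
    rw [← measure_iUnion, hun, measure_univ]
    · intro i j hij
      exact Set.disjoint_left.2 fun ω hi hj => hij (hi.symm.trans hj)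
    · intro j
      exact hmeas (measurableSet_singleton j)
  have hR : ∑' j : ℕ, (ℙ {ω | A ω = j}).toReal = 1 := by
    rw [← ENNReal.tsum_toReal_eq (fun _ => measure_ne_top _ _), hE, ENNReal.toReal_one]
  simp only [pgf, one_pow, mul_one]
  rw [← Complex.ofReal_tsum, hR, Complex.ofReal_one]

/-- **Contour deformation across the branch cut.**  Let `v ∈ (0,1)`, `0 < a < 1 < b < R` with
`|u' A(w)| < |w|^s` for all `|u'| ≤ v` and `a ≤ |w| ≤ b`.  Fix `u ∈ (0,v)`, `z ∈ (a,1)`, set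
`k(w) = w^s - u A(w)`, and let `ζ 0, …, ζ (s-1)` be the zeros of `k` in `|w| < 1` listed with
multiplicity (all with `|ζ j| < a`), encoded by the factorization `k w = (∏ j, (w - ζ j)) * g w`
on `|w| ≤ 1` with `g` analytic and zero-free there.  Then
`∑_j Log ((z - ζ j)/(1 - ζ j))
  = (2πi)⁻¹ ∮_{|w|=b} Log ((z - w)/(1 - w)) k'(w)/k(w) dw − log (1-u) + log (k z)`,
where the logarithms of the positive numbers `1 - u` and `k z` are principal (= real) logs. -/
theorem contour_deformation_branch_cut
    {Ω : Type*} [MeasureSpace Ω] [IsProbabilityMeasure (ℙ : Measure Ω)]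
    (s : ℕ) (hs : 0 < s)
    (A : Ω → ℕ)
    (hmeas : Measurable A)
    (hA0 : 0 < ℙ {ω | A ω = 0}) (hA0' : ℙ {ω | A ω = 0} < 1)
    (R : ℝ) (hR : 1 < R)
    (hsum : ∀ z : ℂ, ‖z‖ < R →
      Summable fun j : ℕ => ((ℙ {ω | A ω = j}).toReal : ℂ) * z ^ j)
    (hanal : AnalyticOnNhd ℂ (pgf A) (Metric.ball 0 R))
    (v : ℝ) (hv : v ∈ Set.Ioo (0 : ℝ) 1)
    (a b : ℝ) (ha : 0 < a) (ha1 : a < 1) (hb1 : 1 < b) (hbR : b < R)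
    (hannulus : ∀ u' : ℂ, ‖u'‖ ≤ v → ∀ w : ℂ, a ≤ ‖w‖ → ‖w‖ ≤ b →
      ‖u' * pgf A w‖ < ‖w‖ ^ s)
    (u : ℝ) (hu : u ∈ Set.Ioo 0 v)
    (z : ℝ) (hz : z ∈ Set.Ioo a 1)
    (ζ : Fin s → ℂ) (hζ : ∀ j, ‖ζ j‖ < a)
    (g : ℂ → ℂ) (hg : AnalyticOnNhd ℂ g (Metric.closedBall 0 1))
    (hgne : ∀ w ∈ Metric.closedBall (0 : ℂ) 1, g w ≠ 0)
    (hfac : ∀ w ∈ Metric.closedBall (0 : ℂ) 1,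
      w ^ s - (u : ℂ) * pgf A w = (∏ j, (w - ζ j)) * g w) :
    ∑ j, Complex.log (((z : ℂ) - ζ j) / (1 - ζ j))
      = (2 * Real.pi * Complex.I)⁻¹ *
          (∮ w in C(0, b), Complex.log (((z : ℂ) - w) / (1 - w)) *
            (deriv (fun w => w ^ s - (u : ℂ) * pgf A w) w / (w ^ s - (u : ℂ) * pgf A w)))
        - Complex.log (1 - (u : ℂ))
        + Complex.log ((z : ℂ) ^ s - (u : ℂ) * pgf A (z : ℂ)) := by
  obtain ⟨hu0, huv⟩ := hu
  obtain ⟨hza, hz1⟩ := hz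
  have hz0 : 0 ≤ z := by linarith
  set k : ℂ → ℂ := fun w => w ^ s - (u : ℂ) * pgf A w with hkdef
  have hksmall : ∀ w : ℂ, a ≤ ‖w‖ → ‖w‖ ≤ b → ‖(u : ℂ) * pgf A w‖ < ‖w‖ ^ s :=
    hannulus u (by
      rw [Complex.norm_real, Real.norm_eq_abs, abs_of_pos hu0]
      exact huv.le)
  have hkne : ∀ w : ℂ, a ≤ ‖w‖ → ‖w‖ ≤ b → k w ≠ 0 := by
    intro w h1 h2 h0
    have := hksmall w h1 h2
    rw [← sub_eq_zero.1 h0, norm_pow] at this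
    exact lt_irrefl _ this
  have hk : AnalyticOnNhd ℂ k (closedBall 0 b) := fun w hw =>
    (analyticAt_id.pow s).sub
      (analyticAt_const.mul (hanal w (closedBall_subset_ball hbR hw)))
  obtain ⟨q, hq, hkq⟩ := exists_analytic_remainder ha1 hk hkne hζ hg hgne hfac
  -- a primitive of `q` on a disk slightly larger than the contour
  obtain ⟨ε, hε, hsub⟩ := (isCompact_closedBall (0 : ℂ) b).exists_thickening_subset_open
    (isOpen_analyticAt ℂ q) hq
  rw [thickening_closedBall hε (by linarith)] at hsub
  have hqd : DifferentiableOn ℂ q (ball 0 (ε + b)) := fun w hw =>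
    (hsub hw).differentiableAt.differentiableWithinAt
  obtain ⟨h, hh⟩ := hqd.isExactOn_ball
  have htb : ∀ t ∈ Icc z 1, a ≤ ‖(t : ℂ)‖ ∧ ‖(t : ℂ)‖ ≤ b ∧ ‖(t : ℂ)‖ = t := by
    intro t ht
    rw [Complex.norm_real, Real.norm_eq_abs, abs_of_nonneg (by linarith [ht.1])]
    exact ⟨by linarith [ht.1], by linarith [ht.2], rfl⟩
  have hkre : ∀ t ∈ Icc z 1, 0 < (k (t : ℝ)).re := by
    intro t ht
    obtain ⟨h1, h2, h3⟩ := htb t ht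
    have hlt := hksmall t h1 h2
    rw [h3] at hlt
    have hle := Complex.re_le_norm ((u : ℂ) * pgf A t)
    rw [hkdef]
    simp only [Complex.sub_re, ← Complex.ofReal_pow, Complex.ofReal_re]
    linarith
  have hmain := sum_log_ratio_eq ha hza hz1 hζ
    (fun t ht => (hk t (by simpa using (htb t ht).2.1)).differentiableAt) hkre
    (fun t ht => hh t (by
      have := (htb t ht).2.1
      simp only [mem_ball_zero_iff]
      linarith)) hkq
  have hk1 : k 1 = 1 - (u : ℂ) := by simp [hkdef, pgf_one hmeas]
  have hsq : ∀ w ∈ sphere (0 : ℂ) b, ‖w‖ = b := fun w hw => mem_sphere_zero_iff_norm.1 hw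
  have hLc : ContinuousOn (fun w : ℂ => Complex.log (((z : ℂ) - w) / (1 - w)))
      (sphere 0 b) := fun w hw =>
    (hasDerivAt_logRatio hz0 hz1 (by rw [hsq w hw]; exact hb1)).continuousAt.continuousWithinAt
  have hI : ∀ j ∈ Finset.univ, CircleIntegrable
      (fun w : ℂ => Complex.log (((z : ℂ) - w) / (1 - w)) * (w - ζ j)⁻¹) 0 b := by
    intro j _
    refine (hLc.mul (ContinuousOn.inv₀ (by fun_prop) ?_)).circleIntegrable (by linarith)
    intro w hw h0
    have := hsq w hw
    rw [sub_eq_zero.1 h0] at this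
    linarith [hζ j]
  have hIq : CircleIntegrable
      (fun w : ℂ => Complex.log (((z : ℂ) - w) / (1 - w)) * q w) 0 b :=
    (hLc.mul (hq.continuousOn.mono sphere_subset_closedBall)).circleIntegrable (by linarith)
  have hint : (∮ w in C(0, b), Complex.log (((z : ℂ) - w) / (1 - w)) * (deriv k w / k w))
      = 2 * Real.pi * Complex.I * (h 1 - h z) := by
    have hcongr : (∮ w in C(0, b), Complex.log (((z : ℂ) - w) / (1 - w)) * (deriv k w / k w))
        = ∮ w in C(0, b), (∑ j, Complex.log (((z : ℂ) - w) / (1 - w)) * (w - ζ j)⁻¹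
          + Complex.log (((z : ℂ) - w) / (1 - w)) * q w) := by
      refine circleIntegral.integral_congr (by linarith) fun w hw => ?_
      rw [hkq w (by rw [hsq w hw]; linarith), mul_add, Finset.mul_sum]
    rw [hcongr, circleIntegral.integral_add (CircleIntegrable.fun_sum _ hI) hIq,
      circleIntegral.integral_fun_sum hI,
      Finset.sum_eq_zero fun j _ => circleIntegral_logRatio_div hz0 hz1 hb1 ((hζ j).trans ha1),
      zero_add, circleIntegral_logRatio_mul hz0 hz1 hb1 (by linarith) hqd.continuousOn hh]
  have hpi : (2 * Real.pi * Complex.I : ℂ) ≠ 0 := Complex.two_pi_I_ne_zero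
  change _ = (2 * Real.pi * Complex.I : ℂ)⁻¹ *
    (∮ w in C(0, b), Complex.log (((z : ℂ) - w) / (1 - w)) * (deriv k w / k w))
      - Complex.log (1 - (u : ℂ)) + Complex.log (k z)
  rw [hint, inv_mul_cancel_left₀ hpi, hmain, hk1]
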